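/- arXiv:2604.00054 — 2 statements merged into one kernel-verified Lean document; each statement's English description precedes it below -/
import Mathlib

section
/- Let b be a prime, m = b², let χ be a primitive Dirichlet character modulo m, and let n ∈ {1,…,m−2} satisfy gcd(n,m) = 1 and gcd(n+1,m) = 1. Then Σ_{a=0}^{m−1} d_n(a)·χ̄(a) = (1 + χ(n) − χ(n+1))·B_{1,χ̄}, where d_n(a) = ⌊(n+1)a/m⌋ − ⌊na/m⌋. -/
open Finset
open scoped Classical

namespace Collision

/-- The diagonal set `G = {n < b² : ⌊n/b⌋ = n mod b}`. -/
def diagSet (b : ℕ) : Finset ℕ :=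
  (Finset.range (b ^ 2)).filter (fun n => n / b = n % b)

/-- The slice increment `d_n(a) = ⌊(n+1)a/b²⌋ − ⌊na/b²⌋`. -/
def d (b n a : ℕ) : ℤ :=
  ((((n + 1) * a) / b ^ 2 : ℕ) : ℤ) - (((n * a) / b ^ 2 : ℕ) : ℤ)

/-- The collision invariant `S(a) = −1 − ⌊a/b⌋ + Σ_{n∈G} d_n(a)`. -/
def S (b a : ℕ) : ℤ :=
  -1 - ((a / b : ℕ) : ℤ) + ∑ n ∈ diagSet b, d b n a

/-- The units `a' ∈ {0,…,b²−1}` with `a' ≡ a (mod b)`. -/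
def cosetUnits (b a : ℕ) : Finset ℕ :=
  (Finset.range (b ^ 2)).filter (fun a' => Nat.gcd a' (b ^ 2) = 1 ∧ a' % b = a % b)

/-- The centered collision invariant `S°(a)`. -/
noncomputable def Scirc (b a : ℕ) : ℝ :=
  (S b a : ℝ) - (1 / (b : ℝ)) * ∑ a' ∈ cosetUnits b a, (S b a' : ℝ)

/-- The Fourier coefficient `Ŝ°(χ) = (1/φ(b²))·Σ_a S°(a)·χ̄(a)`. -/
noncomputable def Shat (b : ℕ) (χ : DirichletCharacter ℂ (b ^ 2)) : ℂ :=
  (1 / (Nat.totient (b ^ 2) : ℂ)) *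
    ∑ a ∈ Finset.range (b ^ 2), (Scirc b a : ℂ) * starRingEnd ℂ (χ (a : ZMod (b ^ 2)))

/-- The generalized first Bernoulli number `B_{1,χ̄} = (1/b²)·Σ_a a·χ̄(a)`. -/
noncomputable def B1bar (b : ℕ) (χ : DirichletCharacter ℂ (b ^ 2)) : ℂ :=
  (1 / ((b : ℂ) ^ 2)) *
    ∑ a ∈ Finset.range (b ^ 2), (a : ℂ) * starRingEnd ℂ (χ (a : ZMod (b ^ 2)))

/-- The diagonal character sum `S_G(χ) = Σ_{n∈G} [χ̄(n+1) − χ̄(n)]`. -/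
noncomputable def SG (b : ℕ) (χ : DirichletCharacter ℂ (b ^ 2)) : ℂ :=
  ∑ n ∈ diagSet b,
    (starRingEnd ℂ (χ ((n + 1 : ℕ) : ZMod (b ^ 2))) - starRingEnd ℂ (χ (n : ZMod (b ^ 2))))

end Collision

/-!
Multiplying by `m` replaces `⌊k a / m⌋` by `k a - (k a mod m)`. When `k` is a unit modulo `m`,
multiplication by `k` permutes the residues, so reindexing `∑ (k a mod m) χ̄(a)` pulls out the
factor `χ(k)` and gives `∑ ⌊k a / m⌋ χ̄(a) = (k - χ(k)) B_{1,χ̄}`. The increment `d_n` is the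
difference of the cases `k = n + 1` and `k = n`. For values in an arbitrary field, the conjugate
`χ̄` becomes the inverse character `χ⁻¹`.
-/

section

variable {m : ℕ} {K : Type*} [Field K]

/-- The generalized first Bernoulli number `B_{1,χ}`, computed from the values of `χ` at the level
`m` itself rather than at its conductor. It has the junk value `0` when `m` vanishes in `K`. -/
noncomputable def bernoulliOne (χ : DirichletCharacter K m) : K :=
  (1 / (m : K)) * ∑ a ∈ range m, (a : K) * χ a

theorem sum_range_natCast_zmod {M : Type*} [AddCommMonoid M] [NeZero m] (f : ZMod m → M) :
    ∑ a ∈ range m, f a = ∑ x, f x :=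
  sum_bij' (fun a _ ↦ (a : ZMod m)) (fun x _ ↦ x.val) (fun _ _ ↦ mem_univ _)
    (fun x _ ↦ mem_range.2 x.val_lt) (fun _ ha ↦ ZMod.val_cast_of_lt (mem_range.1 ha))
    (fun x _ ↦ ZMod.natCast_zmod_val x) (fun _ _ ↦ rfl)

theorem sum_comp_unit_mul_mul_inv_mulChar {M R : Type*} [CommMonoid M] [Fintype M] [CommRing R]
    (χ : MulChar M R) (u : Mˣ) (f : M → R) :
    ∑ x, f (u * x) * χ⁻¹ x = χ u * ∑ x, f x * χ⁻¹ x := by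
  have χ_mul_inv : χ u * χ⁻¹ u = 1 := by
    rw [← MulChar.mul_apply, mul_inv_cancel, MulChar.one_apply_coe]
  rw [mul_sum]
  refine Fintype.sum_equiv u.mulLeft _ _ fun x ↦ ?_
  calc f (u * x) * χ⁻¹ x = (χ u * χ⁻¹ u) * (f (u * x) * χ⁻¹ x) := by rw [χ_mul_inv, one_mul]
    _ = χ u * (f (u * x) * χ⁻¹ (u * x)) := by rw [map_mul]; ring

theorem sum_mul_mod_mul_inv_dirichletCharacter {R : Type*} [CommRing R] [NeZero m]
    (χ : DirichletCharacter R m) {k : ℕ} (hk : k.Coprime m) :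
    ∑ a ∈ range m, ((k * a % m : ℕ) : R) * χ⁻¹ a = χ k * ∑ a ∈ range m, (a : R) * χ⁻¹ a := by
  calc ∑ a ∈ range m, ((k * a % m : ℕ) : R) * χ⁻¹ a
      = ∑ a ∈ range m, (((k : ZMod m) * a).val : R) * χ⁻¹ a := by
        simp only [← Nat.cast_mul, ZMod.val_natCast]
    _ = ∑ x : ZMod m, ((k * x).val : R) * χ⁻¹ x :=
        sum_range_natCast_zmod fun x ↦ ((k * x).val : R) * χ⁻¹ x
    _ = χ k * ∑ x : ZMod m, (x.val : R) * χ⁻¹ x :=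
        sum_comp_unit_mul_mul_inv_mulChar χ (ZMod.unitOfCoprime k hk) fun x ↦ (x.val : R)
    _ = χ k * ∑ a ∈ range m, ((a : ZMod m).val : R) * χ⁻¹ a := by
        rw [sum_range_natCast_zmod fun x ↦ (x.val : R) * χ⁻¹ x]
    _ = χ k * ∑ a ∈ range m, (a : R) * χ⁻¹ a := by
        congr 1
        exact sum_congr rfl fun a ha ↦ by rw [ZMod.val_cast_of_lt (mem_range.1 ha)]

theorem sum_mul_div_mul_inv_dirichletCharacter (χ : DirichletCharacter K m) (hm : (m : K) ≠ 0)
    {k : ℕ} (hk : k.Coprime m) :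
    ∑ a ∈ range m, ((k * a / m : ℕ) : K) * χ⁻¹ a = (k - χ k) * bernoulliOne χ⁻¹ := by
  have : NeZero m := ⟨fun h ↦ hm (by rw [h, Nat.cast_zero])⟩
  have div_eq (a : ℕ) : ((k * a / m : ℕ) : K) = (1 / m) * (k * a - (k * a % m : ℕ)) := by
    have div_add_mod : (m : K) * (k * a / m : ℕ) + (k * a % m : ℕ) = k * a :=
      mod_cast congrArg (Nat.cast (R := K)) (Nat.div_add_mod (k * a) m)
    rw [← div_add_mod, add_sub_cancel_right, one_div, inv_mul_cancel_left₀ hm]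
  calc ∑ a ∈ range m, ((k * a / m : ℕ) : K) * χ⁻¹ a
      = (1 / m) * (k * ∑ a ∈ range m, (a : K) * χ⁻¹ a
          - ∑ a ∈ range m, ((k * a % m : ℕ) : K) * χ⁻¹ a) := by
        simp only [div_eq, mul_sum, ← sum_sub_distrib]
        exact sum_congr rfl fun a _ ↦ by ring
    _ = (k - χ k) * bernoulliOne χ⁻¹ := by
        rw [sum_mul_mod_mul_inv_dirichletCharacter χ hk, bernoulliOne]
        ring

theorem stmt7_general (χ : DirichletCharacter K m) (hm : (m : K) ≠ 0) {n : ℕ}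
    (hn : n.Coprime m) (hn' : (n + 1).Coprime m) :
    ∑ a ∈ range m, ((((n + 1) * a / m : ℕ) : K) - ((n * a / m : ℕ) : K)) * χ⁻¹ a
      = (1 + χ n - χ (n + 1 : ℕ)) * bernoulliOne χ⁻¹ := by
  simp only [sub_mul _ _ (χ⁻¹ _), sum_sub_distrib]
  rw [sum_mul_div_mul_inv_dirichletCharacter χ hm hn',
    sum_mul_div_mul_inv_dirichletCharacter χ hm hn]
  push_cast
  ring

end

open Collision in
theorem stmt7 (b : ℕ) (hb : b.Prime) (χ : DirichletCharacter ℂ (b ^ 2))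
    (hprim : χ.IsPrimitive) (n : ℕ) (h1 : 1 ≤ n) (h2 : n ≤ b ^ 2 - 2)
    (hg1 : Nat.gcd n (b ^ 2) = 1) (hg2 : Nat.gcd (n + 1) (b ^ 2) = 1) :
    ∑ a ∈ Finset.range (b ^ 2), (d b n a : ℂ) * starRingEnd ℂ (χ (a : ZMod (b ^ 2)))
      = (1 + χ (n : ZMod (b ^ 2)) - χ ((n + 1 : ℕ) : ZMod (b ^ 2))) * B1bar b χ := by
  have hm : ((b ^ 2 : ℕ) : ℂ) ≠ 0 := Nat.cast_ne_zero.2 (pow_ne_zero 2 hb.ne_zero)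
  simpa only [d, B1bar, bernoulliOne, ← MulChar.star_apply', RCLike.star_def, Int.cast_sub,
    Int.cast_natCast, Nat.cast_pow] using stmt7_general χ hm hg1 hg2
end

section
/- Let b be a prime, m = b², and let χ be an even Dirichlet character modulo m (χ(−1) = 1). Then Ŝ°(χ) = 0. -/
open Finset
open scoped Classical

/-!
Everything rests on the reflection `a ↦ m - a` with `m = b²`. For a unit `a` the numbers `k a` and
`k (m - a)` add up to `k m`, and neither is divisible by `m` unless `k` is, so
`⌊k a / m⌋ + ⌊k (m - a) / m⌋ = k - 1 + [m ∣ k]`. Hence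
`d_n(a) + d_n(m - a) = 1 + [m ∣ n + 1] - [m ∣ n]`, and in the sum over the diagonal, which is stable
under `n ↦ m - 1 - n`, the divisibility terms cancel. This gives `S(a) + S(m - a) = -1`. Centering
removes the constant, so `S°` is odd on units, and an odd function is orthogonal to every even
character.
-/

namespace Collision

lemma div_add_div_add_one_of_dvd_add {m x y : ℕ} (hxy : m ∣ x + y) (hx : ¬m ∣ x) :
    x / m + y / m + 1 = (x + y) / m := by
  have hm : 0 < m := Nat.pos_of_ne_zero fun h ↦ hx (by simp_all)
  have carry : m ≤ x % m + y % m := by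
    have hpos : 0 < x % m := Nat.pos_of_ne_zero (mt Nat.dvd_of_mod_eq_zero hx)
    refine Nat.le_of_dvd (Nat.add_pos_left hpos _) (Nat.modEq_zero_iff_dvd.1 ?_)
    exact ((Nat.mod_modEq x m).add (Nat.mod_modEq y m)).trans (Nat.modEq_zero_iff_dvd.2 hxy)
  exact (Nat.add_div_eq_of_le_mod_add_mod carry hm).symm

lemma mul_div_add_mul_sub_div {m a : ℕ} (ham : a ≤ m) (hc : a.Coprime m) (k : ℕ) :
    ((k * a / m : ℕ) : ℤ) + ((k * (m - a) / m : ℕ) : ℤ) = k - 1 + if m ∣ k then 1 else 0 := by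
  have hm : 0 < m := Nat.pos_of_ne_zero (by rintro rfl; simp_all)
  have hsum : k * a + k * (m - a) = k * m := by rw [← mul_add, Nat.add_sub_cancel' ham]
  have hdiv : (k * a + k * (m - a)) / m = k := by rw [hsum, Nat.mul_div_cancel _ hm]
  split_ifs with hk
  · have := Nat.add_div_of_dvd_right (b := k * (m - a)) (hk.mul_right a)
    omega
  · have := div_add_div_add_one_of_dvd_add (hsum ▸ dvd_mul_left m k)
      (mt hc.symm.dvd_of_dvd_mul_right hk)
    omega

variable {b a : ℕ}

lemma d_add_d_reflect (ha : a ≤ b ^ 2) (hc : a.Coprime b) (n : ℕ) :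
    d b n a + d b n (b ^ 2 - a) =
      1 + (if b ^ 2 ∣ n + 1 then 1 else 0) - (if b ^ 2 ∣ n then 1 else 0) := by
  have hn := mul_div_add_mul_sub_div ha (hc.pow_right 2) n
  have hn' := mul_div_add_mul_sub_div ha (hc.pow_right 2) (n + 1)
  push_cast [d] at hn hn' ⊢
  linarith

lemma diagSet_eq_image (b : ℕ) : diagSet b = (range b).image (· * (b + 1)) := by
  ext n
  simp only [diagSet, mem_filter, mem_range, mem_image]
  constructor
  · rintro ⟨hn, hdigits⟩
    refine ⟨n / b, Nat.div_lt_of_lt_mul (by rwa [← sq]), ?_⟩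
    calc n / b * (b + 1) = b * (n / b) + n / b := by ring
      _ = b * (n / b) + n % b := by rw [← hdigits]
      _ = n := Nat.div_add_mod n b
  · rintro ⟨k, hk, rfl⟩
    have hb : 0 < b := by omega
    refine ⟨by nlinarith, ?_⟩
    rw [show k * (b + 1) = k + b * k by ring, Nat.add_mul_div_left _ _ hb,
      Nat.add_mul_mod_self_left, Nat.div_eq_of_lt hk, Nat.mod_eq_of_lt hk, zero_add]

lemma sum_diagSet {M : Type*} [AddCommMonoid M] (b : ℕ) (f : ℕ → M) :
    ∑ n ∈ diagSet b, f n = ∑ k ∈ range b, f (k * (b + 1)) := by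
  rw [diagSet_eq_image, sum_image (mul_left_injective₀ b.succ_ne_zero).injOn]

lemma card_diagSet (b : ℕ) : #(diagSet b) = b := by
  rw [card_eq_sum_ones, sum_diagSet, ← card_eq_sum_ones, card_range]

lemma sum_diagSet_reflect {M : Type*} [AddCommMonoid M] (b : ℕ) (f : ℕ → M) :
    ∑ n ∈ diagSet b, f (b ^ 2 - 1 - n) = ∑ n ∈ diagSet b, f n := by
  rw [sum_diagSet, sum_diagSet, ← sum_range_reflect]
  refine sum_congr rfl fun k hk ↦ congrArg f ?_
  rw [show b ^ 2 - 1 = (b - 1) * (b + 1) by simpa [mul_comm] using Nat.sq_sub_sq b 1, ← Nat.sub_mul]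
  congr 1
  have := mem_range.1 hk
  omega

lemma sum_diagSet_dvd_succ (b : ℕ) :
    ∑ n ∈ diagSet b, (if b ^ 2 ∣ n + 1 then (1 : ℤ) else 0) =
      ∑ n ∈ diagSet b, if b ^ 2 ∣ n then 1 else 0 := by
  rw [← sum_diagSet_reflect]
  refine sum_congr rfl fun n hn ↦ ?_
  have hlt : n < b ^ 2 := mem_range.1 (mem_filter.1 hn).1
  rw [show b ^ 2 - 1 - n + 1 = b ^ 2 - n by omega]
  simp only [Nat.dvd_sub_iff_right hlt.le dvd_rfl]

lemma S_reflect (hb : b ≠ 1) (ha : a ≤ b ^ 2) (hc : a.Coprime b) :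
    S b (b ^ 2 - a) = -1 - S b a := by
  have hdiag : ∑ n ∈ diagSet b, d b n a + ∑ n ∈ diagSet b, d b n (b ^ 2 - a) = b := by
    rw [← sum_add_distrib, sum_congr rfl fun n _ ↦ d_add_d_reflect ha hc n, sum_sub_distrib,
      sum_add_distrib, sum_diagSet_dvd_succ, add_sub_cancel_right, sum_const, card_diagSet]
    simp
  have hfloor : a / b + (b ^ 2 - a) / b + 1 = b := by
    have hsum : a + (b ^ 2 - a) = b * b := by rw [Nat.add_sub_cancel' ha, sq]
    have hdvd : ¬b ∣ a := fun h ↦ hb (Nat.eq_one_of_dvd_coprimes hc h dvd_rfl)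
    rw [div_add_div_add_one_of_dvd_add (hsum ▸ dvd_mul_left b b) hdvd, hsum]
    exact Nat.mul_div_cancel b (Nat.pos_of_ne_zero fun h ↦ hdvd (by simp_all))
  unfold S
  omega

lemma mem_cosetUnits {x : ℕ} :
    x ∈ cosetUnits b a ↔ x < b ^ 2 ∧ x.Coprime b ∧ x ≡ a [MOD b] := by
  simp only [cosetUnits, mem_filter, mem_range, Nat.coprime_pow_right_iff two_pos, Nat.ModEq]

lemma card_cosetUnits (hb : 0 < b) (hc : a.Coprime b) : #(cosetUnits b a) = b := by
  have hfilter : cosetUnits b a = {x ∈ range (b ^ 2) | x ≡ a [MOD b]} := by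
    ext x
    rw [mem_cosetUnits, mem_filter, mem_range]
    exact and_congr_right fun _ ↦ and_iff_right_of_imp fun h ↦ h.gcd_eq.trans hc
  rw [hfilter, ← Nat.count_eq_card_filter_range, Nat.count_modEq_card _ hb, sq,
    Nat.mul_div_cancel _ hb, Nat.mul_mod_left, if_neg (Nat.not_lt_zero _), add_zero]

lemma reflect_mem_cosetUnits (hb : b ≠ 1) (ha : a ≤ b ^ 2) {x : ℕ} (hx : x ∈ cosetUnits b a) :
    b ^ 2 - x ∈ cosetUnits b (b ^ 2 - a) := by
  obtain ⟨hlt, hc, hmod⟩ := mem_cosetUnits.1 hx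
  have hx0 : x ≠ 0 := by rintro rfl; exact hb ((Nat.coprime_zero_left b).1 hc)
  refine mem_cosetUnits.2 ⟨by omega, ?_, Nat.ModEq.sub hlt.le ha rfl hmod⟩
  have := (Nat.coprime_self_sub_left hlt.le).2 (hc.pow_right 2)
  exact (Nat.coprime_pow_right_iff two_pos _ _).1 this

lemma sum_cosetUnits_reflect {M : Type*} [AddCommMonoid M] (hb : b ≠ 1) (ha : a ≤ b ^ 2)
    (f : ℕ → M) :
    ∑ x ∈ cosetUnits b (b ^ 2 - a), f x = ∑ x ∈ cosetUnits b a, f (b ^ 2 - x) := by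
  have hinv {c x : ℕ} (hx : x ∈ cosetUnits b c) : b ^ 2 - (b ^ 2 - x) = x :=
    Nat.sub_sub_self (mem_cosetUnits.1 hx).1.le
  refine sum_nbij' (b ^ 2 - ·) (b ^ 2 - ·) (fun x hx ↦ ?_) (fun x ↦ reflect_mem_cosetUnits hb ha)
    (fun x ↦ hinv) (fun x ↦ hinv) (fun x hx ↦ by rw [hinv hx])
  simpa only [Nat.sub_sub_self ha] using reflect_mem_cosetUnits hb (Nat.sub_le _ a) hx

lemma Scirc_reflect (hb : 1 < b) (ha : a ≤ b ^ 2) (hc : a.Coprime b) :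
    Scirc b (b ^ 2 - a) = -Scirc b a := by
  have hS {x : ℕ} (hx : x ≤ b ^ 2) (hxc : x.Coprime b) : (S b (b ^ 2 - x) : ℝ) = -1 - S b x := by
    exact_mod_cast S_reflect hb.ne' hx hxc
  have hcoset : ∑ x ∈ cosetUnits b (b ^ 2 - a), (S b x : ℝ) =
      -b - ∑ x ∈ cosetUnits b a, (S b x : ℝ) := by
    calc ∑ x ∈ cosetUnits b (b ^ 2 - a), (S b x : ℝ)
        = ∑ x ∈ cosetUnits b a, (S b (b ^ 2 - x) : ℝ) := sum_cosetUnits_reflect hb.ne' ha _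
      _ = ∑ x ∈ cosetUnits b a, (-1 - S b x : ℝ) := sum_congr rfl fun x hx ↦
          have ⟨hlt, hxc, _⟩ := mem_cosetUnits.1 hx
          hS hlt.le hxc
      _ = -b - ∑ x ∈ cosetUnits b a, (S b x : ℝ) := by
          simp [sum_sub_distrib, card_cosetUnits (by omega) hc]
  have hb0 : (b : ℝ) ≠ 0 := by positivity
  rw [Scirc, Scirc, hS ha hc, hcoset]
  field_simp
  ring

lemma sum_range_mul_eq_zero_of_even {R : Type*} [CommRing R] [IsAddTorsionFree R] {m : ℕ}
    (hm : 1 < m) {χ : DirichletCharacter R m} (hχ : χ.Even) {f : ℕ → R}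
    (hf : ∀ a < m, a.Coprime m → f (m - a) = -f a) :
    ∑ a ∈ range m, f a * χ a = 0 := by
  have : NeZero m := ⟨by omega⟩
  have : Fact (1 < m) := ⟨hm⟩
  have hodd : Function.Odd fun x : ZMod m ↦ f x.val * χ x := fun x ↦ by
    by_cases hx : IsUnit x
    · have hc : x.val.Coprime m := by rwa [← ZMod.isUnit_iff_coprime, ZMod.natCast_zmod_val]
      simp only [ZMod.neg_val, if_neg hx.ne_zero, hf _ x.val_lt hc, hχ.eval_neg, neg_mul]
    · simp only [hχ.eval_neg, χ.map_nonunit hx, mul_zero, neg_zero]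
  rw [← hodd.sum_eq_zero]
  refine sum_nbij' (fun a ↦ (a : ZMod m)) ZMod.val (fun _ _ ↦ mem_univ _)
    (fun x _ ↦ mem_range.2 x.val_lt) (fun a ha ↦ ZMod.val_cast_of_lt (mem_range.1 ha))
    (fun x _ ↦ ZMod.natCast_zmod_val x)
    (fun a ha ↦ by rw [ZMod.val_cast_of_lt (mem_range.1 ha)])

end Collision

open Collision in
theorem stmt12_general (b : ℕ) (hb : 1 < b) (χ : DirichletCharacter ℂ (b ^ 2))
    (heven : χ.Even) :
    Shat b χ = 0 := by
  have : NeZero (b ^ 2) := ⟨by positivity⟩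
  have hconj (x : ZMod (b ^ 2)) : starRingEnd ℂ (χ x) = χ⁻¹ x := MulChar.star_apply' χ x
  have heven' : χ⁻¹.Even := by
    rw [DirichletCharacter.Even, ← hconj, heven, map_one]
  have hodd : ∀ a < b ^ 2, a.Coprime (b ^ 2) →
      (Scirc b (b ^ 2 - a) : ℂ) = -(Scirc b a : ℂ) := fun a ha hc ↦ by
    rw [Scirc_reflect hb ha.le ((Nat.coprime_pow_right_iff two_pos _ _).1 hc), Complex.ofReal_neg]
  simp only [Shat, hconj]
  rw [sum_range_mul_eq_zero_of_even (Nat.one_lt_pow two_ne_zero hb) heven' hodd, mul_zero]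

open Collision in
theorem stmt12 (b : ℕ) (hb : b.Prime) (χ : DirichletCharacter ℂ (b ^ 2))
    (heven : χ.Even) :
    Shat b χ = 0 := stmt12_general b hb.one_lt χ heven
end
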